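/- Let R be a ring and let C• be a cochain complex of R-modules concentrated in degrees [0, d]. Let f ∈ End_{D(R)}(C•) be an endomorphism in the derived category which induces the zero map on all cohomology groups H^i(C•). Then f^{d+1} = 0 in End_{D(R)}(C•). -/

import Mathlib

/-!
Call a morphism of the derived category a ghost if it is zero on all cohomology. A morphism
`X ⟶ Y` with `X` in degrees `≤ n` and `Y` in degrees `≥ n` is determined by its effect on `Hⁿ`, so
a ghost `f : X ⟶ Y` with `Y` in degrees `≥ n` vanishes on `τ≤n X` and hence factors through
`τ≥(n+1) X`. Thus composing with a ghost raises by one the degree `n` for which a morphism factors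
through an object in degrees `≥ n`. If `X` lives in degrees `≥ a`, then `f ^ k` factors
through an object in degrees `≥ a + k`, and such a morphism is zero once `a + k` exceeds the
top degree of `X`.
-/

open CategoryTheory

section HomologicalComplex

variable {ι V : Type*} [Category* V] [Limits.HasZeroMorphisms V] {c : ComplexShape ι}

lemma homologicalComplexHom_f_eq_zero_of_homologyMap_eq_zero {K L : HomologicalComplex V c}
    (φ : K ⟶ L) {i j k : ι} [K.HasHomology j] [L.HasHomology j] (hi : c.prev j = i)
    (hk : c.next j = k) (hK : K.d j k = 0) (hL : L.d i j = 0)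
    (hφ : HomologicalComplex.homologyMap φ j = 0) : φ.f j = 0 := by
  have : IsIso (K.iCycles j) := K.isIso_iCycles j k hk hK
  have : IsIso (L.pOpcycles j) := L.isIso_pOpcycles i j hi hL
  rw [← cancel_epi (K.iCycles j), ← cancel_mono (L.pOpcycles j)]
  calc (K.iCycles j ≫ φ.f j) ≫ L.pOpcycles j
      = K.homologyπ j ≫ HomologicalComplex.homologyMap φ j ≫ L.homologyι j := by simp
    _ = (K.iCycles j ≫ 0) ≫ L.pOpcycles j := by simp [hφ]

lemma cochainComplexHom_eq_zero_of_homologyMap_eq_zero {K L : CochainComplex V ℤ} (φ : K ⟶ L)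
    (n : ℤ) [K.HasHomology n] [L.HasHomology n] [K.IsStrictlyLE n] [L.IsStrictlyGE n]
    (hφ : HomologicalComplex.homologyMap φ n = 0) : φ = 0 := by
  ext i
  obtain hi | rfl | hi := lt_trichotomy i n
  · exact (L.isZero_of_isStrictlyGE n i hi).eq_of_tgt _ _
  · exact homologicalComplexHom_f_eq_zero_of_homologyMap_eq_zero φ rfl rfl
      ((K.isZero_of_isStrictlyLE i _ (by simp)).eq_of_tgt _ _)
      ((L.isZero_of_isStrictlyGE i _ (by simp)).eq_of_src _ _) hφ
  · exact (K.isZero_of_isStrictlyLE n i hi).eq_of_src _ _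

end HomologicalComplex

section TStructure

open Limits Pretriangulated Triangulated

variable {C : Type*} [Category* C] [Preadditive C] [HasZeroObject C] [HasShift C ℤ]
  [∀ n : ℤ, (shiftFunctor C n).Additive] [Pretriangulated C] (t : TStructure C)

/-- The morphism `f` factors through an object which is `≥ n` for the t-structure `t`. It
measures how far composing ghosts has pushed a morphism up the t-structure. -/
def FactorsThroughGE (n : ℤ) {X Y : C} (f : X ⟶ Y) : Prop :=
  ∃ (W : C) (_ : t.IsGE W n) (p : X ⟶ W) (q : W ⟶ Y), p ≫ q = f

namespace FactorsThroughGE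

variable {t}

lemma of_isGE_left {n : ℤ} {X Y : C} [t.IsGE X n] (f : X ⟶ Y) : FactorsThroughGE t n f :=
  ⟨X, inferInstance, 𝟙 X, f, Category.id_comp f⟩

lemma comp_right {n : ℤ} {X Y Z : C} {f : X ⟶ Y} (hf : FactorsThroughGE t n f) (g : Y ⟶ Z) :
    FactorsThroughGE t n (f ≫ g) := by
  obtain ⟨W, hW, p, q, rfl⟩ := hf
  exact ⟨W, hW, p, q ≫ g, (Category.assoc p q g).symm⟩

lemma of_comp_eq_zero_of_isLE {n : ℤ} {X Y : C} {f : X ⟶ Y}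
    (hf : ∀ (W : C) (g : W ⟶ X), t.IsLE W n → g ≫ f = 0) : FactorsThroughGE t (n + 1) f := by
  obtain ⟨X₁, X₂, hX₁, hX₂, i, p, δ, hT⟩ := t.exists_triangle X n (n + 1) rfl
  obtain ⟨q, hq⟩ := Triangle.yoneda_exact₂ _ hT f (hf X₁ i ⟨hX₁⟩)
  exact ⟨X₂, ⟨hX₂⟩, p, q, hq.symm⟩

lemma eq_zero {n m : ℤ} {X Y : C} [t.IsLE X m] {f : X ⟶ Y} (hf : FactorsThroughGE t n f)
    (hmn : m < n) : f = 0 := by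
  obtain ⟨W, hW, p, q, rfl⟩ := hf
  rw [t.zero p m n hmn, zero_comp]

end FactorsThroughGE

end TStructure

section DerivedCategory

open DerivedCategory Limits

variable {A : Type*} [Category* A] [Abelian A] [HasDerivedCategory A]

lemma derivedCategoryHom_eq_zero_of_homologyFunctor_map_eq_zero {X Y : DerivedCategory A} (n : ℤ)
    [X.IsLE n] [Y.IsGE n] (f : X ⟶ Y) (hf : (homologyFunctor A n).map f = 0) : f = 0 := by
  obtain ⟨K, _, ⟨e⟩⟩ := exists_iso_Q_obj_of_isLE X n
  obtain ⟨L, _, ⟨e'⟩⟩ := exists_iso_Q_obj_of_isGE Y n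
  obtain ⟨K', _, s, _, φ, hφ⟩ := right_fac_of_isStrictlyLE (e.inv ≫ f ≫ e'.hom) n
  have hQφ : Q.map φ = Q.map s ≫ e.inv ≫ f ≫ e'.hom := by simp [hφ]
  have hHQφ : (homologyFunctor A n).map (Q.map φ) = 0 := by simp [hQφ, hf]
  have hHφ : HomologicalComplex.homologyMap φ n = 0 := by
    apply zero_of_epi_comp ((homologyFunctorFactors A n).hom.app K')
    rw [← homologyFunctorFactors_hom_naturality, hHQφ]
    exact zero_comp
  have hφ₀ : φ = 0 := cochainComplexHom_eq_zero_of_homologyMap_eq_zero φ n hHφ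
  rw [← cancel_epi e.inv, ← cancel_mono e'.hom, Category.assoc, hφ, hφ₀]
  simp

/-- A ghost is a morphism of the derived category which induces zero on cohomology in every
degree. -/
def IsGhost {X Y : DerivedCategory A} (f : X ⟶ Y) : Prop :=
  ∀ i : ℤ, (homologyFunctor A i).map f = 0

namespace IsGhost

variable {X Y Z : DerivedCategory A}

lemma comp_right {f : X ⟶ Y} (hf : IsGhost f) (g : Y ⟶ Z) : IsGhost (f ≫ g) := fun i ↦ by
  rw [Functor.map_comp, hf i, zero_comp]

lemma comp_left {g : Y ⟶ Z} (hg : IsGhost g) (f : X ⟶ Y) : IsGhost (f ≫ g) := fun i ↦ by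
  rw [Functor.map_comp, hg i, comp_zero]

lemma factorsThroughGE_add_one {f : X ⟶ Y} (hf : IsGhost f) (n : ℤ) [Y.IsGE n] :
    FactorsThroughGE TStructure.t (n + 1) f :=
  .of_comp_eq_zero_of_isLE fun _ g _ ↦
    derivedCategoryHom_eq_zero_of_homologyFunctor_map_eq_zero n (g ≫ f) (hf.comp_left g n)

lemma factorsThroughGE_comp {f : X ⟶ Y} (hf : IsGhost f) {n : ℤ} {g : Y ⟶ Z}
    (hg : FactorsThroughGE TStructure.t n g) :
    FactorsThroughGE TStructure.t (n + 1) (f ≫ g) := by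
  obtain ⟨W, _, p, q, rfl⟩ := hg
  rw [← Category.assoc]
  exact ((hf.comp_right p).factorsThroughGE_add_one n).comp_right q

lemma factorsThroughGE_pow {f : End X} (hf : IsGhost f) (a : ℤ) [X.IsGE a] (k : ℕ) :
    FactorsThroughGE TStructure.t (a + k) (f ^ k : End X) := by
  induction k with
  | zero =>
    rw [Nat.cast_zero, add_zero]
    exact .of_isGE_left _
  | succ k ih =>
    rw [Nat.cast_succ, ← add_assoc, pow_succ, End.mul_def]
    exact hf.factorsThroughGE_comp ih

end IsGhost

theorem statement_3_general {X : DerivedCategory A} {a b : ℤ} [X.IsGE a] [X.IsLE b] {n : ℕ}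
    (hn : b < a + n) {f : End X} (hf : IsGhost f) : f ^ n = 0 :=
  (hf.factorsThroughGE_pow a n).eq_zero hn

end DerivedCategory

theorem statement_3 (R : Type) [CommRing R] [HasDerivedCategory (ModuleCat R)]
    (d : ℕ) (C : CochainComplex (ModuleCat R) ℤ)
    (hC : ∀ i : ℤ, (i < 0 ∨ (d : ℤ) < i) → Limits.IsZero (C.X i))
    (f : End (DerivedCategory.Q.obj C))
    (hf : ∀ i : ℤ, (DerivedCategory.homologyFunctor (ModuleCat R) i).map f = 0) :
    f ^ (d + 1) = 0 := by
  have : C.IsStrictlyGE 0 := (C.isStrictlyGE_iff 0).2 fun i hi ↦ hC i (.inl hi)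
  have : C.IsStrictlyLE d := (C.isStrictlyLE_iff d).2 fun i hi ↦ hC i (.inr hi)
  exact statement_3_general (a := 0) (b := d) (by simp) hf
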